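/- Convergence of infima of epi- and pointwise-convergent sums over nonempty compact sets: Let 𝒳 ⊆ ℝⁿ be closed, let β ∈ (0,1), and let f, f_ν, g, g_ν : 𝒳 → ℝ (ν ∈ ℕ) be real-valued functions such that f_ν epi-converges to f, f_ν converges pointwise to f, g_ν epi-converges to g, and g_ν converges pointwise to g. Then for every nonempty compact set K ⊆ 𝒳, inf_{y∈K} { f_ν(y) + β g_ν(y) } → inf_{y∈K} { f(y) + β g(y) } as ν → ∞. -/

import Mathlib

/-!
Epi-convergence upgrades, by a diagonal argument, to a locally uniform lower bound: if `c < f z`,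
then for all large `ν` one has `c < fν` on one fixed relative neighbourhood of `z`
(`EpiConvergesOn.exists_nhdsWithin_lt`). Such bounds add up, so the sum `h = f + β g` satisfies
them too. With pointwise convergence they give local lower bounds for `h` itself; hence, by
compactness, `h` is bounded below on `K`. Compactness applied once more shows that every
`c < inf_K h` is eventually a lower bound of `hν` on all of `K`. In particular the infima of `hν`
are eventually genuine (not the junk value of `sInf` on an unbounded set) and at least `c`. The
upper estimate is pointwise convergence at a near-minimiser of `h`.
-/

open Filter Topology Set

noncomputable section

/-- Epi-convergence of a sequence of extended-real-valued functions on a set `Z`. -/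
def EpiConvergesOn {E : Type*} [TopologicalSpace E] (Z : Set E)
    (F : ℕ → E → EReal) (f : E → EReal) : Prop :=
  ∀ z ∈ Z,
    (∀ zs : ℕ → E, (∀ ν, zs ν ∈ Z) → Tendsto zs atTop (𝓝 z) →
      f z ≤ liminf (fun ν => F ν (zs ν)) atTop) ∧
    (∃ zs : ℕ → E, (∀ ν, zs ν ∈ Z) ∧ Tendsto zs atTop (𝓝 z) ∧
      limsup (fun ν => F ν (zs ν)) atTop ≤ f z)

/-- The liminf half of epi-convergence yields a lower bound that is uniform on a neighbourhood and
in large `ν`. Otherwise points `y k → z` with `F (φ k) (y k) ≤ c` would exist along a subsequence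
`φ`; completing them by the constant `z` contradicts the liminf inequality. -/
lemma EpiConvergesOn.exists_nhdsWithin_lt {E : Type*} [PseudoMetricSpace E] {Z : Set E}
    {F : ℕ → E → ℝ} {f : E → ℝ}
    (h : EpiConvergesOn Z (fun ν y => ((F ν y : ℝ) : EReal)) (fun y => ((f y : ℝ) : EReal)))
    {z : E} (hz : z ∈ Z) {c : ℝ} (hc : c < f z) :
    ∃ t ∈ 𝓝[Z] z, ∀ᶠ ν in atTop, ∀ y ∈ t, c < F ν y := by
  by_contra hcon
  push Not at hcon
  have hfreq : ∀ k : ℕ, ∃ᶠ ν in atTop, ∃ y, y ∈ Z ∧ dist y z < 1 / ((k : ℝ) + 1) ∧ F ν y ≤ c := by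
    intro k
    refine (hcon (Metric.ball z (1 / ((k : ℝ) + 1)) ∩ Z)
      (inter_mem (mem_nhdsWithin_of_mem_nhds (Metric.ball_mem_nhds _ Nat.one_div_pos_of_nat))
        self_mem_nhdsWithin)).mono ?_
    rintro ν ⟨y, ⟨hy, hyZ⟩, hle⟩
    exact ⟨y, hyZ, hy, hle⟩
  obtain ⟨φ, hφ, hP⟩ := extraction_forall_of_frequently hfreq
  choose y hyZ hyd hyc using hP
  let zs : ℕ → E := Function.extend φ y (fun _ => z)
  have hzsφ : ∀ k, zs (φ k) = y k := fun k => hφ.injective.extend_apply _ _ _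
  have hzs' : ∀ ν, (¬ ∃ k, φ k = ν) → zs ν = z := fun ν hν => Function.extend_apply' _ _ _ hν
  have hzsZ : ∀ ν, zs ν ∈ Z := by
    intro ν
    by_cases hν : ∃ k, φ k = ν
    · obtain ⟨k, rfl⟩ := hν
      rw [hzsφ]; exact hyZ k
    · rw [hzs' ν hν]; exact hz
  have hzst : Tendsto zs atTop (𝓝 z) := by
    rw [Metric.tendsto_atTop]
    intro ε hε
    obtain ⟨k, hk⟩ := exists_nat_one_div_lt hε
    refine ⟨φ k, fun ν hν => ?_⟩
    by_cases hν' : ∃ j, φ j = ν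
    · obtain ⟨j, rfl⟩ := hν'
      rw [hzsφ]
      exact ((hyd j).trans_le (Nat.one_div_le_one_div (hφ.le_iff_le.1 hν))).trans hk
    · rw [hzs' ν hν', dist_self]; exact hε
  have h1 := (h z hz).1 zs hzsZ hzst
  have h2 : liminf (fun ν => ((F ν (zs ν) : ℝ) : EReal)) atTop ≤ (c : EReal) := by
    refine liminf_le_of_frequently_le' (frequently_atTop.2 fun N => ⟨φ N, hφ.id_le N, ?_⟩)
    rw [hzsφ]
    exact_mod_cast hyc N
  exact absurd (EReal.coe_le_coe_iff.1 (h1.trans h2)) (not_le.2 hc)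

/-- Convergence of infima of epi- and pointwise-convergent sums over
nonempty compact sets. -/
theorem inf_sum_converges_of_epi_and_pointwise {n : ℕ}
    (X : Set (EuclideanSpace ℝ (Fin n))) (hX : IsClosed X)
    (β : ℝ) (hβ : β ∈ Set.Ioo (0 : ℝ) 1)
    (f g : EuclideanSpace ℝ (Fin n) → ℝ)
    (fν gν : ℕ → EuclideanSpace ℝ (Fin n) → ℝ)
    (hfe : EpiConvergesOn X (fun ν y => ((fν ν y : ℝ) : EReal)) (fun y => ((f y : ℝ) : EReal)))
    (hfp : ∀ y ∈ X, Tendsto (fun ν => fν ν y) atTop (𝓝 (f y)))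
    (hge : EpiConvergesOn X (fun ν y => ((gν ν y : ℝ) : EReal)) (fun y => ((g y : ℝ) : EReal)))
    (hgp : ∀ y ∈ X, Tendsto (fun ν => gν ν y) atTop (𝓝 (g y))) :
    ∀ K : Set (EuclideanSpace ℝ (Fin n)), K ⊆ X → K.Nonempty → IsCompact K →
      Tendsto (fun ν => sInf ((fun y => fν ν y + β * gν ν y) '' K)) atTop
        (𝓝 (sInf ((fun y => f y + β * g y) '' K))) := by
  intro K hKX hKne hK
  have hloc : ∀ z ∈ X, ∀ c < f z + β * g z,
      ∃ t ∈ 𝓝[X] z, ∀ᶠ ν in atTop, ∀ y ∈ t, c < fν ν y + β * gν ν y := by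
    intro z hz c hc
    -- The slack `2 δ` is shared between the two summands; `β < 1` absorbs the factor `β`.
    obtain ⟨δ, hδ, hδc⟩ : ∃ δ : ℝ, 0 < δ ∧ c + 2 * δ = f z + β * g z :=
      ⟨(f z + β * g z - c) / 2, by linarith, by ring⟩
    obtain ⟨s, hs, hs'⟩ := hfe.exists_nhdsWithin_lt hz (sub_lt_self (f z) hδ)
    obtain ⟨t, ht, ht'⟩ := hge.exists_nhdsWithin_lt hz (sub_lt_self (g z) hδ)
    refine ⟨s ∩ t, inter_mem hs ht, ?_⟩
    filter_upwards [hs', ht'] with ν h1 h2 y hy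
    have h3 := h1 y hy.1
    have h4 := mul_lt_mul_of_pos_left (h2 y hy.2) hβ.1
    have h5 := mul_lt_mul_of_pos_right hβ.2 hδ
    linarith
  have hpt : ∀ y ∈ X, Tendsto (fun ν => fν ν y + β * gν ν y) atTop (𝓝 (f y + β * g y)) :=
    fun y hy => (hfp y hy).add ((hgp y hy).const_mul β)
  have hbdd : BddBelow ((fun y => f y + β * g y) '' K) := by
    refine hK.induction_on (p := fun s => BddBelow ((fun y => f y + β * g y) '' s)) (by simp)
      (fun s t hst ht => ht.mono (image_mono hst))
      (fun s t hs ht => by rw [image_union]; exact hs.union ht) ?_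
    intro z hz
    obtain ⟨t, ht, ht'⟩ := hloc z (hKX hz) _ (sub_one_lt _)
    refine ⟨t ∩ K, inter_mem (nhdsWithin_mono z hKX ht) self_mem_nhdsWithin,
      f z + β * g z - 1, ?_⟩
    rintro _ ⟨y, hy, rfl⟩
    exact ge_of_tendsto (hpt y (hKX hy.2)) (ht'.mono fun ν hν => (hν y hy.1).le)
  have hlow : ∀ c < sInf ((fun y => f y + β * g y) '' K),
      ∀ᶠ ν in atTop, ∀ y ∈ K, c < fν ν y + β * gν ν y := by
    intro c hc
    refine hK.induction_on
      (p := fun s => ∀ᶠ ν in atTop, ∀ y ∈ s, c < fν ν y + β * gν ν y) (by simp)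
      (fun s t hst ht => ht.mono fun ν hν y hy => hν y (hst hy))
      (fun s t hs ht => by
        filter_upwards [hs, ht] with ν h1 h2 y hy
        exact hy.elim (h1 y) (h2 y)) ?_
    intro z hz
    obtain ⟨t, ht, ht'⟩ :=
      hloc z (hKX hz) c (hc.trans_le (csInf_le hbdd (mem_image_of_mem _ hz)))
    exact ⟨t, nhdsWithin_mono z hKX ht, ht'⟩
  rw [tendsto_order]
  refine ⟨fun a ha => ?_, fun a ha => ?_⟩
  · obtain ⟨c, hac, hc⟩ := exists_between ha
    filter_upwards [hlow c hc] with ν hν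
    refine hac.trans_le (le_csInf (hKne.image _) ?_)
    rintro _ ⟨y, hy, rfl⟩
    exact (hν y hy).le
  · obtain ⟨_, ⟨y, hy, rfl⟩, hya⟩ := exists_lt_of_csInf_lt (hKne.image _) ha
    filter_upwards [hlow _ (sub_one_lt _), (hpt y (hKX hy)).eventually_lt_const hya] with ν h1 h2
    -- Boundedness below for this `ν` is what makes `sInf` an actual lower bound.
    refine lt_of_le_of_lt (csInf_le
      ⟨sInf ((fun y => f y + β * g y) '' K) - 1, ?_⟩ (mem_image_of_mem _ hy)) h2
    rintro _ ⟨x, hx, rfl⟩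
    exact (h1 x hx).le

end
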